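/- For every n ≥ 7 with n ≡ 3 (mod 4), the alternating configuration of n pegs can be sorted in ⌈n/2⌉ Berge 3-moves: for n = 4i+3 ≥ 11, first move the triple at positions 4i, 4i+1, 4i+2 to positions −2, −1, 0, then sort the remaining 4i+2 pegs using the solution for n−1 ≡ 2 (mod 4) (which shifts the string three positions right and places white pegs left of black pegs), while the peg originally at position 4i+3 falls into its correct sorted place. Hence h(n,3) = ⌈n/2⌉ for n ≡ 3 (mod 4), n ≥ 7. -/

import Mathlib

/-- A board configuration has finite support: only finitely many positions hold pegs. -/
def FinSupp (c : ℤ → Option Bool) : Prop := {p : ℤ | (c p).isSome}.Finite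

/-- The disorder: number of pegs `p` such that it is NOT the case that the next peg
to the right of `p` exists and has the same color. -/
noncomputable def disorder (c : ℤ → Option Bool) : ℕ :=
  Set.ncard {p : ℤ | (c p).isSome ∧
    ¬ ∃ q : ℤ, p < q ∧ c q = c p ∧ ∀ r : ℤ, p < r → r < q → c r = none}

/-- A Berge `k`-move taking the `k` pegs at positions `i, i+1, ..., i+k-1` to the
`k` vacant positions `j, j+1, ..., j+k-1`, preserving order. -/
def MoveTo (k : ℕ) (i j : ℤ) (c c' : ℤ → Option Bool) : Prop :=
  (j + k ≤ i ∨ i + k ≤ j) ∧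
  (∀ t : ℤ, 0 ≤ t → t < k → (c (i + t)).isSome ∧ c (j + t) = none) ∧
  c' = fun p => if j ≤ p ∧ p < j + k then c (i + (p - j))
    else if i ≤ p ∧ p < i + k then none else c p

/-- A Berge `k`-move from some source to some destination. -/
def BergeMove (k : ℕ) (c c' : ℤ → Option Bool) : Prop :=
  ∃ i j : ℤ, MoveTo k i j c c'

/-- The alternating configuration of `n` pegs: pegs at positions `1,...,n`,
white (`true`) at odd positions and black (`false`) at even positions. -/
def altConfig (n : ℕ) : ℤ → Option Bool :=
  fun p => if 1 ≤ p ∧ p ≤ (n : ℤ) then some (decide (p % 2 = 1)) else none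

/-- A sorted configuration of `n` pegs: a contiguous block of `n` pegs, the first
`⌈n/2⌉` of one color, followed by the remaining `⌊n/2⌋` of the other color. -/
def IsSorted (n : ℕ) (c : ℤ → Option Bool) : Prop :=
  ∃ j : ℤ, ∃ w : Bool,
    (∀ p : ℤ, (c p).isSome ↔ (j ≤ p ∧ p < j + (n : ℤ))) ∧
    (∀ p : ℤ, j ≤ p → p < j + (((n + 1) / 2 : ℕ) : ℤ) → c p = some w) ∧
    (∀ p : ℤ, j + (((n + 1) / 2 : ℕ) : ℤ) ≤ p → p < j + (n : ℤ) → c p = some (!w))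

/-- The alternating configuration of `n` pegs can be sorted in `m` Berge `k`-moves. -/
def SortsIn (k n m : ℕ) : Prop :=
  ∃ f : ℕ → (ℤ → Option Bool), f 0 = altConfig n ∧
    (∀ i < m, BergeMove k (f i) (f (i + 1))) ∧ IsSorted n (f m)


/-! ### Upper bound: explicit sequence of moves -/

/-- alternating colouring -/
def altCol (p : ℤ) : Option Bool := if p % 2 = 1 then some true else some false

theorem altConfig_eq (n : ℕ) (p : ℤ) :
    altConfig n p = if 1 ≤ p ∧ p ≤ (n : ℤ) then altCol p else none := by
  unfold altConfig altCol
  split_ifs <;> simp_all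

def confOne (i : ℤ) (p : ℤ) : Option Bool :=
  if p < 1 then none else if p ≤ 1 then some true else if p ≤ 4 then none
  else if p ≤ 4 * i + 6 then altCol p else none

def confTwo (i : ℤ) (p : ℤ) : Option Bool :=
  if p < 1 then none else if p ≤ 2 then some true else if p ≤ 3 then some false
  else if p ≤ 4 then some true
  else if p ≤ 2 * i + 4 then altCol p else if p ≤ 2 * i + 7 then none
  else if p ≤ 4 * i + 6 then altCol p else none

def confX (i j : ℤ) (p : ℤ) : Option Bool :=
  if p < 1 then none else if p ≤ 2 + 2 * j then some true else if p ≤ 5 + 2 * j then none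
  else if p ≤ 2 * i + 4 then altCol p else if p ≤ 2 * i + 5 + 2 * j then some false
  else if p ≤ 2 * i + 6 + 2 * j then some true
  else if p ≤ 4 * i + 6 then altCol p else none

def confY (i j : ℤ) (p : ℤ) : Option Bool :=
  if p < 1 then none else if p ≤ 4 + 2 * j then some true else if p ≤ 5 + 2 * j then some false
  else if p ≤ 2 * i + 4 then altCol p else if p ≤ 2 * i + 5 + 2 * j then some false
  else if p ≤ 2 * i + 8 + 2 * j then none
  else if p ≤ 4 * i + 6 then altCol p else none

theorem move_zero (i : ℕ) (hi : 1 ≤ i) :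
    BergeMove 3 (altConfig (4 * i + 3)) (confOne i) := by
  refine ⟨2, 4 * i + 4, by omega, ?_, ?_⟩
  · intro t h0 h3
    simp only [altConfig_eq, altCol]
    grind
  · funext p
    simp only [altConfig_eq, confOne, altCol]
    grind

theorem move_one (i : ℤ) (hi : 1 ≤ i) : BergeMove 3 (confOne i) (confTwo i) := by
  refine ⟨2 * i + 5, 2, by omega, ?_, ?_⟩
  · intro t h0 h3
    simp only [confOne, altCol]
    grind
  · funext p
    simp only [confOne, confTwo, altCol]
    grind

theorem move_two (i : ℤ) (hi : 1 ≤ i) : BergeMove 3 (confTwo i) (confX i 0) := by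
  refine ⟨3, 2 * i + 5, by omega, ?_, ?_⟩
  · intro t h0 h3
    simp only [confTwo, altCol]
    grind
  · funext p
    simp only [confX, confTwo, altCol]
    grind

theorem move_XY (i j : ℤ) (hj : 0 ≤ j) (hi : j < i) : BergeMove 3 (confX i j) (confY i j) := by
  refine ⟨2 * i + 6 + 2 * j, 3 + 2 * j, by omega, ?_, ?_⟩
  · intro t h0 h3
    simp only [confX, altCol]
    grind
  · funext p
    simp only [confX, confY, altCol]
    grind

theorem move_YX (i j : ℤ) (hj : 0 ≤ j) (hi : j + 1 < i) :
    BergeMove 3 (confY i j) (confX i (j + 1)) := by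
  refine ⟨5 + 2 * j, 2 * i + 6 + 2 * j, by omega, ?_, ?_⟩
  · intro t h0 h3
    simp only [confY, altCol]
    grind
  · funext p
    simp only [confX, confY, altCol]
    grind

def solSeq (i : ℕ) : ℕ → (ℤ → Option Bool)
  | 0 => altConfig (4 * i + 3)
  | 1 => confOne i
  | 2 => confTwo i
  | (k + 3) => if k % 2 = 0 then confX i ((k / 2 : ℕ) : ℤ) else confY i ((k / 2 : ℕ) : ℤ)

theorem upper_bound (i : ℕ) (hi : 1 ≤ i) : SortsIn 3 (4 * i + 3) (2 * i + 2) := by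
  refine ⟨solSeq i, rfl, ?_, ?_⟩
  · intro k hk
    match k, hk with
    | 0, _ => exact move_zero i hi
    | 1, _ => exact move_one i (by omega)
    | 2, _ =>
      have := move_two i (by omega)
      simpa [solSeq] using this
    | (k + 3), hk =>
      simp only [solSeq]
      rcases Nat.mod_two_eq_zero_or_one k with h | h
      · have h2 : (k + 1) % 2 ≠ 0 := by omega
        have h3 : (k + 1) / 2 = k / 2 := by omega
        rw [if_pos h, if_neg h2, h3]
        exact move_XY _ _ (by omega) (by omega)
      · have h2 : (k + 1) % 2 = 0 := by omega
        have h3 : (k + 1) / 2 = k / 2 + 1 := by omega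
        rw [if_neg (by omega), if_pos h2, h3]
        have := move_YX i ((k / 2 : ℕ) : ℤ) (by omega) (by omega)
        simpa using this
  · obtain ⟨r, rfl⟩ : ∃ r, i = r + 1 := ⟨i - 1, by omega⟩
    have hs : solSeq (r + 1) (2 * (r + 1) + 2) = confY ((r + 1 : ℕ) : ℤ) r := by
      have e : 2 * (r + 1) + 2 = (2 * r + 1) + 3 := by ring
      rw [e]
      simp only [solSeq]
      rw [if_neg (by omega)]
      congr 2
      omega
    rw [hs]
    refine ⟨1, true, ?_, ?_, ?_⟩
    · intro p
      simp only [confY, altCol]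
      grind
    · intro p h1 h2
      simp only [confY, altCol]
      grind
    · intro p h1 h2
      simp only [confY, altCol]
      grind

/-! ### Lower bound -/

/-- positions `p` such that `p`, `p+1` carry pegs of the same colour -/
def eqEdges (c : ℤ → Option Bool) : Set ℤ := {p | (c p).isSome ∧ c p = c (p + 1)}

theorem eqEdges_finite {c : ℤ → Option Bool} (h : FinSupp c) : (eqEdges c).Finite :=
  Set.Finite.subset h (fun _ hp => hp.1)

theorem finSupp_move {i j : ℤ} {c c' : ℤ → Option Bool} (h : FinSupp c)
    (hm : MoveTo 3 i j c c') : FinSupp c' := by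
  obtain ⟨_, _, h3⟩ := hm
  refine Set.Finite.subset (Set.Finite.union h (Set.finite_Icc j (j + 3))) ?_
  intro p hp
  simp only [Set.mem_ofPred_eq, h3] at hp
  simp only [Set.mem_union, Set.mem_ofPred_eq, Set.mem_Icc]
  push_cast at hp
  split_ifs at hp with h1 h2
  · right; omega
  · simp at hp
  · left; exact hp

theorem eqEdges_sub {i j : ℤ} {c c' : ℤ → Option Bool} (hm : MoveTo 3 i j c c') :
    eqEdges c' ⊆ (eqEdges c' ∩ {j - 1, j + 2}) ∪
      ((fun p => p + (j - i)) '' (eqEdges c ∩ {i, i + 1}) ∪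
        (eqEdges c \ {i - 1, i, i + 1, i + 2})) := by
  obtain ⟨h1, h2, h3⟩ := hm
  push_cast at h1 h3
  intro p hp
  by_cases hpj : p = j - 1 ∨ p = j + 2
  · left
    refine ⟨hp, ?_⟩
    simpa using hpj
  right
  by_cases hpi : p = j ∨ p = j + 1
  · left
    refine ⟨p - (j - i), ⟨?_, ?_⟩, by ring⟩
    · obtain ⟨ha, hb⟩ := hp
      rw [h3] at ha hb
      have e1 : j ≤ p ∧ p < j + 3 := by omega
      have e2 : j ≤ p + 1 ∧ p + 1 < j + 3 := by omega
      simp only [if_pos e1, if_pos e2] at ha hb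
      have e3 : i + (p - j) = p - (j - i) := by ring
      have e4 : i + (p + 1 - j) = p - (j - i) + 1 := by ring
      rw [e3] at ha hb
      rw [e4] at hb
      exact ⟨ha, hb⟩
    · simp only [Set.mem_insert_iff, Set.mem_singleton_iff]
      omega
  · right
    obtain ⟨ha, hb⟩ := hp
    have hb' := ha
    rw [hb] at hb'
    rw [h3] at ha hb hb'
    have e1 : ¬ (j ≤ p ∧ p < j + 3) := by omega
    have e2 : ¬ (j ≤ p + 1 ∧ p + 1 < j + 3) := by omega
    simp only [if_neg e1, if_neg e2] at ha hb hb'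
    by_cases f1 : i ≤ p ∧ p < i + 3
    · simp [if_pos f1] at ha
    by_cases f2 : i ≤ p + 1 ∧ p + 1 < i + 3
    · simp [if_pos f2] at hb'
    simp only [if_neg f1, if_neg f2] at ha hb
    refine ⟨⟨ha, hb⟩, ?_⟩
    simp only [Set.mem_insert_iff, Set.mem_singleton_iff]
    omega

open Classical in
theorem edges_ineq {i j : ℤ} {c c' : ℤ → Option Bool} (h : FinSupp c)
    (hm : MoveTo 3 i j c c') :
    (eqEdges c').ncard + ((if i - 1 ∈ eqEdges c then 1 else 0) +
      (if i + 2 ∈ eqEdges c then 1 else 0)) ≤ (eqEdges c).ncard +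
      ((if j - 1 ∈ eqEdges c' then 1 else 0) + (if j + 2 ∈ eqEdges c' then 1 else 0)) := by
  have hS := eqEdges_finite h
  have hS' := eqEdges_finite (finSupp_move h hm)
  have key : ∀ (T : Set ℤ) (a : ℤ),
      (T ∩ {a - 1, a + 2}).ncard = (if a - 1 ∈ T then 1 else 0) + (if a + 2 ∈ T then 1 else 0) := by
    intro T a
    by_cases h1 : a - 1 ∈ T <;> by_cases h2 : a + 2 ∈ T
    · have : T ∩ {a - 1, a + 2} = {a - 1, a + 2} := by
        ext x; simp only [Set.mem_inter_iff, Set.mem_insert_iff, Set.mem_singleton_iff]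
        constructor
        · exact fun h => h.2
        · rintro (rfl | rfl) <;> simp [*]
      rw [this, Set.ncard_pair (by omega)]; simp [h1, h2]
    · have : T ∩ {a - 1, a + 2} = {a - 1} := by
        ext x; simp only [Set.mem_inter_iff, Set.mem_insert_iff, Set.mem_singleton_iff]
        constructor
        · rintro ⟨hx, rfl | rfl⟩ <;> simp_all
        · rintro rfl; simp [*]
      rw [this, Set.ncard_singleton]; simp [h1, h2]
    · have : T ∩ {a - 1, a + 2} = {a + 2} := by
        ext x; simp only [Set.mem_inter_iff, Set.mem_insert_iff, Set.mem_singleton_iff]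
        constructor
        · rintro ⟨hx, rfl | rfl⟩ <;> simp_all
        · rintro rfl; simp [*]
      rw [this, Set.ncard_singleton]; simp [h1, h2]
    · have : T ∩ {a - 1, a + 2} = ∅ := by
        ext x
        simp only [Set.mem_inter_iff, Set.mem_insert_iff, Set.mem_singleton_iff,
          Set.mem_empty_iff_false, iff_false]
        rintro ⟨hx, rfl | rfl⟩ <;> simp_all
      rw [this, Set.ncard_empty]; simp [h1, h2]
  rw [← key (eqEdges c') j, ← key (eqEdges c) i]
  have hT : (eqEdges c ∩ {i, i + 1}).Finite := hS.inter_of_left _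
  have hU : (eqEdges c \ {i - 1, i, i + 1, i + 2}).Finite := hS.sdiff
  have b1 : (eqEdges c').ncard ≤ (eqEdges c' ∩ {j - 1, j + 2}).ncard +
      ((eqEdges c ∩ {i, i + 1}).ncard + (eqEdges c \ {i - 1, i, i + 1, i + 2}).ncard) := by
    refine (Set.ncard_le_ncard (eqEdges_sub hm)
      ((hS'.inter_of_left _).union ((hT.image _).union hU))).trans ?_
    refine (Set.ncard_union_le _ _).trans ?_
    refine Nat.add_le_add_left ((Set.ncard_union_le _ _).trans ?_) _
    exact Nat.add_le_add_right (Set.ncard_image_le hT) _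
  have hV : (eqEdges c ∩ {i - 1, i + 2}).Finite := hS.inter_of_left _
  have b2 : (eqEdges c ∩ {i - 1, i + 2}).ncard +
      ((eqEdges c ∩ {i, i + 1}).ncard + (eqEdges c \ {i - 1, i, i + 1, i + 2}).ncard)
      ≤ (eqEdges c).ncard := by
    rw [← Set.ncard_union_eq _ hT hU, ← Set.ncard_union_eq _ hV (hT.union hU)]
    · refine Set.ncard_le_ncard ?_ hS
      rintro x (hx | hx | hx) <;> exact hx.1
    · rw [Set.disjoint_left]
      simp only [Set.mem_inter_iff, Set.mem_union, Set.mem_sdiff, Set.mem_insert_iff,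
        Set.mem_singleton_iff]
      rintro x ⟨_, hx⟩ (⟨_, hy⟩ | ⟨_, hy⟩) <;> omega
    · rw [Set.disjoint_left]
      simp only [Set.mem_inter_iff, Set.mem_sdiff, Set.mem_insert_iff, Set.mem_singleton_iff]
      rintro x ⟨_, hx⟩ ⟨_, hy⟩
      omega
  omega

theorem edges_le {i j : ℤ} {c c' : ℤ → Option Bool} (h : FinSupp c)
    (hm : MoveTo 3 i j c c') : (eqEdges c').ncard ≤ (eqEdges c).ncard + 2 := by
  classical
  have := edges_ineq h hm
  split_ifs at this <;> omega

theorem edges_tight {i j : ℤ} {c c' : ℤ → Option Bool} (h : FinSupp c)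
    (hm : MoveTo 3 i j c c') (he : (eqEdges c').ncard = (eqEdges c).ncard + 2) :
    j - 1 ∈ eqEdges c' ∧ j + 2 ∈ eqEdges c' ∧ i - 1 ∉ eqEdges c ∧ i + 2 ∉ eqEdges c := by
  classical
  have := edges_ineq h hm
  split_ifs at this <;> first | omega | tauto

theorem edges_first {i j : ℤ} {c c' : ℤ → Option Bool} (h : FinSupp c)
    (hm : MoveTo 3 i j c c') (hj : j - 1 ∉ eqEdges c') :
    (eqEdges c').ncard ≤ (eqEdges c).ncard + 1 ∧
    (j + 2 ∉ eqEdges c' → (eqEdges c').ncard ≤ (eqEdges c).ncard) := by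
  classical
  have := edges_ineq h hm
  split_ifs at this <;> first | omega | tauto

/-- a hole state -/
structure HoleState (n : ℤ) (c : ℤ → Option Bool) (h q : ℤ) : Prop where
  supp : ∀ p, (c p).isSome = true ↔ (-2 ≤ p ∧ p ≤ n ∧ ¬ (h ≤ p ∧ p ≤ h + 2))
  hn : h + 2 < n
  hLR : c (h - 1) = c (h + 3)
  hq : -1 ≤ q
  hodd : q % 2 = 1
  ha : ∀ p, p % 2 = 1 → -1 ≤ p → p ≤ q → c (p - 1) ≠ c p
  hb : ∀ p, p % 2 = 1 → -1 ≤ p → p < q → c p = c (p + 1)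
  typ : (q + 2 < h ∧ c q ≠ c (q + 1) ∧ c (q + 1) = c (q + 2)) ∨
    (q + 3 < h ∧ c q = c (q + 1) ∧ c (q + 1) = c (q + 2) ∧ c (q + 2) = c (q + 3)) ∨ h = q + 1

/-- a contiguous state which is not sorted -/
def BlockState (n : ℤ) (c : ℤ → Option Bool) : Prop :=
  ∃ lo, (∀ p, (c p).isSome = true ↔ (lo ≤ p ∧ p < lo + n)) ∧
    (c lo ≠ c (lo + 1) ∨
      ∃ p, lo ≤ p ∧ p + 2 < lo + n ∧ c p ≠ c (p + 1) ∧ c (p + 1) ≠ c (p + 2))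

theorem opt_key {a b x z : Option Bool} (ha : a.isSome = true) (hb : b.isSome = true)
    (hx : x.isSome = true) (h1 : a ≠ x) (h2 : z ≠ b) (h3 : x = z) : a = b := by
  subst h3
  cases a <;> cases b <;> cases x <;> simp_all
  rename_i a b x
  cases a <;> cases b <;> cases x <;> simp_all

theorem block_no_move {n : ℤ} {c c' : ℤ → Option Bool} {i j : ℤ} (h : BlockState n c)
    (hm : MoveTo 3 i j c c') (h1 : j - 1 ∈ eqEdges c') (h2 : j + 2 ∈ eqEdges c') : False := by
  obtain ⟨lo, hs, _⟩ := h
  obtain ⟨m1, m2, m3⟩ := hm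
  push_cast at m1 m2 m3
  have a1 := h1.1
  have a2 : (c' (j + 3)).isSome = true := by
    have := h2.1
    rw [h2.2] at this
    rwa [show j + 2 + 1 = j + 3 by ring] at this
  rw [m3] at a1 a2
  have e1 : ¬ (j ≤ j - 1 ∧ j - 1 < j + 3) := by omega
  have e2 : ¬ (j ≤ j + 3 ∧ j + 3 < j + 3) := by omega
  simp only [if_neg e1, if_neg e2] at a1 a2
  split_ifs at a1 a2 <;> try simp at a1 a2
  have b1 := (hs _).1 a1
  have b2 := (hs _).1 a2
  have b3 : (c j).isSome = true := (hs j).2 (by omega)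
  have b4 := (m2 0 (by omega) (by omega)).2
  simp at b4
  rw [b4] at b3
  simp at b3

set_option maxHeartbeats 2000000 in
theorem hole_step {n : ℤ} {c c' : ℤ → Option Bool} {h q i j : ℤ} (H : HoleState n c h q)
    (hm : MoveTo 3 i j c c') (h1 : j - 1 ∈ eqEdges c') (h2 : j + 2 ∈ eqEdges c')
    (h3 : i - 1 ∉ eqEdges c) (h4 : i + 2 ∉ eqEdges c) :
    (∃ h' q', HoleState n c' h' q') ∨ BlockState n c' := by
  obtain ⟨supp, hn, hLR, hq, hodd, ha, hb, typ⟩ := H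
  have hh : 0 ≤ h := by omega
  obtain ⟨m1, m2, m3⟩ := hm
  push_cast at m1 m2 m3
  have s0 := (m2 0 (by omega) (by omega))
  have s1 := (m2 1 (by omega) (by omega))
  have s2 := (m2 2 (by omega) (by omega))
  rw [add_zero, add_zero] at s0
  have d0 : ¬ (-2 ≤ j ∧ j ≤ n ∧ ¬ (h ≤ j ∧ j ≤ h + 2)) := by
    rw [← supp, s0.2]; simp
  have d1 : ¬ (-2 ≤ j + 1 ∧ j + 1 ≤ n ∧ ¬ (h ≤ j + 1 ∧ j + 1 ≤ h + 2)) := by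
    rw [← supp, s1.2]; simp
  have d2 : ¬ (-2 ≤ j + 2 ∧ j + 2 ≤ n ∧ ¬ (h ≤ j + 2 ∧ j + 2 ≤ h + 2)) := by
    rw [← supp, s2.2]; simp
  have t0 := (supp _).1 s0.1
  have t1 := (supp _).1 s1.1
  have t2 := (supp _).1 s2.1
  have a1 := h1.1
  have a2 : (c' (j + 3)).isSome = true := by
    have := h2.1
    rw [h2.2] at this
    rwa [show j + 2 + 1 = j + 3 by ring] at this
  have e1 : ¬ (j ≤ j - 1 ∧ j - 1 < j + 3) := by omega
  have e2 : ¬ (j ≤ j + 3 ∧ j + 3 < j + 3) := by omega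
  have n1 : ¬ (i ≤ j - 1 ∧ j - 1 < i + 3) := by
    intro hc
    rw [m3] at a1
    simp only [if_neg e1, if_pos hc] at a1
    simp at a1
  have n2 : ¬ (i ≤ j + 3 ∧ j + 3 < i + 3) := by
    intro hc
    rw [m3] at a2
    simp only [if_neg e2, if_pos hc] at a2
    simp at a2
  have out : ∀ p, ¬ (j ≤ p ∧ p < j + 3) → ¬ (i ≤ p ∧ p < i + 3) → c' p = c p := by
    intro p hp1 hp2
    rw [m3]
    simp only [if_neg hp1, if_neg hp2]
  have i0 : c' j = c i := by
    rw [m3]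
    simp
  have i1 : c' (j + 1) = c (i + 1) := by
    rw [m3]
    simp
  have i2 : c' (j + 2) = c (i + 2) := by
    rw [m3]
    simp
  rw [out _ e1 n1] at a1
  rw [out _ e2 n2] at a2
  have b1 := (supp _).1 a1
  have b2 := (supp _).1 a2
  have hj : j = h := by omega
  subst hj
  have eL : c (j - 1) = c i := by
    have := h1.2
    rw [out _ e1 n1] at this
    rw [this, ← i0]
    congr 1
    ring
  have eR : c (i + 2) = c (j + 3) := by
    have := h2.2
    rw [show j + 2 + 1 = j + 3 by ring, out _ e2 n2] at this
    rw [← this, i2]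
  have exz : c i = c (i + 2) := by rw [← eL, hLR, eR]
  have f1 : c (i - 1) ≠ c i := by
    intro e
    apply h3
    refine ⟨?_, ?_⟩
    · rw [e]; exact s0.1
    · rw [e]; congr 1; ring
  have f2 : c (i + 2) ≠ c (i + 3) := by
    intro e
    apply h4
    refine ⟨s2.1, ?_⟩
    rw [e]; congr 1; ring
  have pos : i + 4 ≤ j ∨ j + 4 ≤ i := by omega
  have supp' : ∀ p, (c' p).isSome = true ↔ (-2 ≤ p ∧ p ≤ n ∧ ¬ (i ≤ p ∧ p ≤ i + 2)) := by
    intro p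
    by_cases hp1 : j ≤ p ∧ p < j + 3
    · have : (c' p).isSome = true := by
        obtain rfl | rfl | rfl : p = j ∨ p = j + 1 ∨ p = j + 2 := by omega
        · rw [i0]; exact s0.1
        · rw [i1]; exact s1.1
        · rw [i2]; exact s2.1
      simp only [this, true_iff]
      omega
    · by_cases hp2 : i ≤ p ∧ p < i + 3
      · have : c' p = none := by
          rw [m3]
          simp only [if_neg hp1, if_pos hp2]
        rw [this]
        simp
        omega
      · rw [out p hp1 hp2, supp]
        omega
  have first : c (-2) ≠ c (-1) := by
    have := ha (-1) (by norm_num) le_rfl hq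
    simpa using this
  -- left end triple
  by_cases hl : i = -2
  · right
    subst hl
    refine ⟨1, ?_, Or.inr ⟨j, by omega, by omega, ?_, ?_⟩⟩
    · intro p
      rw [supp']
      omega
    · rw [i0, i1]; simpa using first
    · rw [i1, i2, ← exz]; simpa using first.symm
  have first' : c' (-2) ≠ c' (-1) := by
    by_cases hi : i = -1
    · exfalso
      subst hi
      by_cases hq1 : q = -1
      · subst hq1
        rcases typ with ⟨_, t, t'⟩ | ⟨_, t, t', t''⟩ | t
        · norm_num at t t' exz
          exact t (by rw [exz, t'])
        · norm_num at t'' f2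
          exact f2 t''
        · omega
      · have u1 := hb (-1) (by norm_num) le_rfl (by omega)
        have u2 := ha 1 (by norm_num) (by omega) (by omega)
        norm_num at u1 u2 exz
        exact u2 (by rw [← u1, exz])
    · rw [out _ (by omega) (by omega), out _ (by omega) (by omega)]
      exact first
  -- right end triple
  by_cases hr : i + 2 = n
  · right
    refine ⟨-2, ?_, Or.inl ?_⟩
    · intro p
      rw [supp']
      omega
    · simpa using first'
  left
  have LR' : c' (i - 1) = c' (i + 3) := by
    by_cases z1 : j ≤ i - 1 ∧ i - 1 < j + 3
    · omega
    by_cases z2 : j ≤ i + 3 ∧ i + 3 < j + 3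
    · omega
    rw [out _ z1 (by omega), out _ z2 (by omega)]
    refine opt_key ((supp _).2 (by omega)) ((supp _).2 (by omega)) s0.1 f1 f2 exz
  -- position of the new hole with respect to the structure
  have big : q + 1 ≤ i ∧ (j = q + 1 → j + 4 ≤ i) := by
    have : q + 1 ≤ i := by
      by_contra hlt
      rcases Int.emod_two_eq_zero_or_one i with hi | hi
      · have := hb (i - 1) (by omega) (by omega) (by omega)
        rw [show i - 1 + 1 = i by ring] at this
        exact f1 this
      · by_cases hiq : i = q
        · subst hiq
          rcases typ with ⟨_, t, t'⟩ | ⟨_, t, t', t''⟩ | t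
          · exact t (by rw [exz, t'])
          · exact f2 t''
          · omega
        · have u1 := hb i hi (by omega) (by omega)
          have u2 := ha (i + 2) (by omega) (by omega) (by omega)
          rw [show i + 2 - 1 = i + 1 by ring] at u2
          exact u2 (by rw [← u1, exz])
    omega
  have keepA : ∀ p, p % 2 = 1 → -1 ≤ p → p ≤ q → c' (p - 1) ≠ c' p := by
    intro p hp hp1 hp2
    rw [out _ (by omega) (by omega), out _ (by omega) (by omega)]
    exact ha p hp hp1 hp2
  have keepB : ∀ p, p % 2 = 1 → -1 ≤ p → p < q → c' p = c' (p + 1) := by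
    intro p hp hp1 hp2
    rw [out _ (by omega) (by omega), out _ (by omega) (by omega)]
    exact hb p hp hp1 hp2
  rcases typ with ⟨t0, t, t'⟩ | ⟨t0, t, t', t''⟩ | t
  · by_cases hi1 : i = q + 1
    · exact ⟨i, q, supp', by omega, LR', hq, hodd, keepA, keepB, Or.inr (Or.inr hi1)⟩
    have hi2 : i ≠ q + 2 := by
      rintro rfl
      rw [show q + 2 - 1 = q + 1 by ring] at f1
      exact f1 t'
    refine ⟨i, q, supp', by omega, LR', hq, hodd, keepA, keepB, Or.inl ⟨by omega, ?_, ?_⟩⟩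
    · rw [out _ (by omega) (by omega), out _ (by omega) (by omega)]
      exact t
    · rw [out _ (by omega) (by omega), out _ (by omega) (by omega)]
      exact t'
  · have hi1 : i ≠ q + 1 := by
      rintro rfl
      rw [show q + 1 - 1 = q by ring] at f1
      exact f1 t
    have hi2 : i ≠ q + 2 := by
      rintro rfl
      rw [show q + 2 - 1 = q + 1 by ring] at f1
      exact f1 t'
    have hi3 : i ≠ q + 3 := by
      rintro rfl
      rw [show q + 3 - 1 = q + 2 by ring] at f1
      exact f1 t''
    refine ⟨i, q, supp', by omega, LR', hq, hodd, keepA, keepB,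
      Or.inr (Or.inl ⟨by omega, ?_, ?_, ?_⟩)⟩
    · rw [out _ (by omega) (by omega), out _ (by omega) (by omega)]
      exact t
    · rw [out _ (by omega) (by omega), out _ (by omega) (by omega)]
      exact t'
    · rw [out _ (by omega) (by omega), out _ (by omega) (by omega)]
      exact t''
  · subst t
    have hi := big.2 rfl
    have o1 : c' q = c q := out _ (by omega) (by omega)
    have o2 : c' (q + 4) = c (q + 4) := out _ (by omega) (by omega)
    rw [show q + 1 + 1 = q + 2 by ring] at i1
    rw [show q + 1 + 2 = q + 3 by ring] at i2
    rw [show q + 1 - 1 = q by ring] at eL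
    rw [show q + 1 + 3 = q + 4 by ring] at eR
    by_cases hy : c (i + 1) = c i
    · refine ⟨i, q, supp', by omega, LR', hq, hodd, keepA, keepB,
        Or.inr (Or.inl ⟨by omega, ?_, ?_, ?_⟩)⟩
      · rw [o1, i0, eL]
      · rw [i0, i1, hy]
      · rw [i1, i2, hy, exz]
    · refine ⟨i, q + 2, supp', by omega, LR', by omega, by omega, ?_, ?_,
        Or.inl ⟨by omega, ?_, ?_⟩⟩
      · intro p hp hp1 hp2
        by_cases hpq : p = q + 2
        · subst hpq
          rw [show q + 2 - 1 = q + 1 by ring, i0, i1]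
          exact fun e => hy e.symm
        · exact keepA p hp hp1 (by omega)
      · intro p hp hp1 hp2
        by_cases hpq : p = q
        · subst hpq
          rw [o1, i0, eL]
        · exact keepB p hp hp1 (by omega)
      · rw [show q + 2 + 1 = q + 3 by ring, i1, i2, ← exz]
        exact hy
      · rw [show q + 2 + 1 = q + 3 by ring, show q + 2 + 2 = q + 4 by ring, i2, o2, eR]

/-- reflection-invariant weak form of sortedness -/
def WeakSorted (n : ℤ) (c : ℤ → Option Bool) : Prop :=
  ∃ (j s : ℤ) (w : Bool), 2 ≤ s ∧ s + 2 ≤ n ∧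
    (∀ p : ℤ, (c p).isSome = true ↔ (j ≤ p ∧ p < j + n)) ∧
    (∀ p : ℤ, j ≤ p → p < j + s → c p = some w) ∧
    (∀ p : ℤ, j + s ≤ p → p < j + n → c p = some (!w))

theorem weak_edges {n : ℤ} {c : ℤ → Option Bool} (h : WeakSorted n c) (hf : FinSupp c) :
    n - 2 ≤ ((eqEdges c).ncard : ℤ) := by
  obtain ⟨j, s, w, hs1, hs2, h1, h2, h3⟩ := h
  have hsub : (((Finset.Ico j (j + n - 1)).erase (j + s - 1) : Finset ℤ) : Set ℤ) ⊆ eqEdges c := by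
    intro p hp
    simp only [Finset.coe_erase, Finset.coe_Ico, Set.mem_sdiff, Set.mem_Ico,
      Set.mem_singleton_iff] at hp
    refine ⟨(h1 p).2 (by omega), ?_⟩
    by_cases hps : p < j + s
    · rw [h2 p (by omega) hps, h2 (p + 1) (by omega) (by omega)]
    · rw [h3 p (by omega) (by omega), h3 (p + 1) (by omega) (by omega)]
  have := Set.ncard_le_ncard hsub (eqEdges_finite hf)
  rw [Set.ncard_coe_finset, Finset.card_erase_of_mem (by simp; omega), Int.card_Ico] at this
  omega

theorem weak_not_block {n : ℤ} {c : ℤ → Option Bool} (h : WeakSorted n c) (hb : BlockState n c) :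
    False := by
  obtain ⟨j, s, w, hs1, hs2, h1, h2, h3⟩ := h
  obtain ⟨lo, g1, g2⟩ := hb
  have e1 : j ≤ lo ∧ lo < j + n := (h1 lo).1 ((g1 lo).2 (by omega))
  have e2 : lo ≤ j ∧ j < lo + n := (g1 j).1 ((h1 j).2 (by omega))
  have : lo = j := by omega
  subst this
  rcases g2 with g | ⟨p, p1, p2, g, g'⟩
  · rw [h2 lo (by omega) (by omega), h2 (lo + 1) (by omega) (by omega)] at g
    exact g rfl
  · by_cases hp : p + 1 < lo + s
    · rw [h2 p (by omega) (by omega), h2 (p + 1) (by omega) (by omega)] at g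
      exact g rfl
    · rw [h3 (p + 1) (by omega) (by omega), h3 (p + 2) (by omega) (by omega)] at g'
      exact g' rfl

theorem weak_not_hole {n h q : ℤ} {c : ℤ → Option Bool} (hw : WeakSorted n c)
    (hb : HoleState n c h q) : False := by
  obtain ⟨j, s, w, hs1, hs2, h1, h2, h3⟩ := hw
  have hh : 0 ≤ h := by
    have := hb.typ
    have := hb.hq
    omega
  have hn := hb.hn
  have e1 := (h1 (-2)).1 ((hb.supp _).2 (by omega))
  have e2 := (h1 n).1 ((hb.supp _).2 (by omega))
  omega

theorem finSupp_alt (n : ℕ) : FinSupp (altConfig n) := by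
  refine Set.Finite.subset (Set.finite_Icc (1 : ℤ) n) ?_
  intro p hp
  simp only [Set.mem_ofPred_eq, altConfig] at hp
  split_ifs at hp with h
  · exact h
  · simp at hp

theorem eqEdges_alt (n : ℕ) : eqEdges (altConfig n) = ∅ := by
  ext p
  simp only [Set.mem_empty_iff_false, iff_false]
  rintro ⟨h1, h2⟩
  rw [altConfig_eq, altConfig_eq] at h2
  rw [altConfig_eq] at h1
  unfold altCol at h1 h2
  split_ifs at h1 h2 <;> first | omega | simp_all

theorem first_step {n : ℕ} (hn : 7 ≤ n) (hodd : n % 2 = 1) {c' : ℤ → Option Bool} {i j : ℤ}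
    (hm : MoveTo 3 i j (altConfig n) c') (hj : j ≤ -2) :
    (eqEdges c').ncard ≤ 1 ∧ (1 ≤ (eqEdges c').ncard →
      (∃ h q, HoleState n c' h q) ∨ BlockState n c') := by
  have hE : (eqEdges (altConfig n)).ncard = 0 := by rw [eqEdges_alt]; simp
  have hj1 : j - 1 ∉ eqEdges c' := by
    rintro ⟨h, _⟩
    rw [hm.2.2] at h
    simp only [altConfig_eq] at h
    push_cast at h
    split_ifs at h <;> first | omega | simp at h
  obtain ⟨k1, k2⟩ := edges_first (finSupp_alt n) hm hj1
  rw [hE] at k1 k2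
  refine ⟨by omega, fun hge => ?_⟩
  have hj2 : j + 2 ∈ eqEdges c' := by
    by_contra hc
    have := k2 hc
    omega
  obtain ⟨m1, m2, m3⟩ := hm
  push_cast at m1 m2 m3
  have s0 := (m2 0 (by omega) (by omega)).1
  have s2 := (m2 2 (by omega) (by omega)).1
  have c0 : 1 ≤ i := by
    rw [altConfig_eq] at s0
    split_ifs at s0
    · omega
    · simp at s0
  have c2 : i + 2 ≤ n := by
    rw [altConfig_eq] at s2
    split_ifs at s2
    · omega
    · simp at s2
  have cv : ∀ p, c' p = if j ≤ p ∧ p < j + 3 then altCol (i + (p - j)) else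
      if i ≤ p ∧ p < i + 3 then none else if 1 ≤ p ∧ p ≤ (n : ℤ) then altCol p else none := by
    intro p
    rw [m3]
    simp only [altConfig_eq]
    split_ifs <;> first | rfl | omega
  obtain ⟨x1, x2⟩ := hj2
  have x3 := x1
  rw [x2] at x3
  have hjj : j = -2 := by
    rw [cv] at x3
    split_ifs at x3 <;> first | omega | simp at x3
  subst hjj
  have hi : i ≠ 1 := by
    rintro rfl
    rw [cv] at x3
    norm_num at x3
  have hi2 : i % 2 = 1 := by
    rw [cv, cv] at x2
    unfold altCol at x2
    norm_num at x2
    split_ifs at x2 <;> first | omega | simp at x2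
  have col : ∀ p, (altCol p).isSome = true := by
    intro p
    unfold altCol
    split_ifs <;> rfl
  have v1 : c' (-2) = some true := by
    rw [cv]; unfold altCol; norm_num; omega
  have v2 : c' (-1) = some false := by
    rw [cv]; unfold altCol; norm_num; omega
  have v3 : c' 0 = some true := by
    rw [cv]; unfold altCol; norm_num; omega
  have v4 : c' 1 = some true := by
    rw [cv]; unfold altCol
    rw [if_neg (by omega), if_neg (by omega), if_pos (by omega), if_pos (by omega)]
  have supp' : ∀ p, (c' p).isSome = true ↔ (-2 ≤ p ∧ p ≤ n ∧ ¬ (i ≤ p ∧ p ≤ i + 2)) := by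
    intro p
    rw [cv]
    split_ifs <;> simp [col] <;> omega
  by_cases hin : i + 2 = n
  · right
    refine ⟨-2, ?_, Or.inl ?_⟩
    · intro p
      rw [supp']
      omega
    · norm_num
      rw [v1, v2]
      simp
  · left
    refine ⟨i, -1, supp', by omega, ?_, le_rfl, by norm_num, ?_, ?_, Or.inl ⟨by omega, ?_, ?_⟩⟩
    · rw [cv, cv]
      unfold altCol
      split_ifs <;> first | omega | rfl
    · intro p _ _ _
      have : p = -1 := by omega
      subst this
      norm_num
      rw [v1, v2]
      simp
    · intro p _ _ _
      omega
    · norm_num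
      rw [v2, v3]
      simp
    · norm_num
      rw [v3, v4]

theorem core {n m : ℕ} (hn : 7 ≤ n) (hodd : n % 2 = 1) (hm : 2 * m + 1 ≤ n)
    (f : ℕ → (ℤ → Option Bool)) (h0 : f 0 = altConfig n)
    (hmv : ∀ i < m, BergeMove 3 (f i) (f (i + 1))) (hs : WeakSorted n (f m))
    (hleft : ∃ i j : ℤ, j ≤ -2 ∧ MoveTo 3 i j (f 0) (f 1)) : False := by
  have fin : ∀ k, k ≤ m → FinSupp (f k) := by
    intro k
    induction k with
    | zero => intro _; rw [h0]; exact finSupp_alt n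
    | succ k ih =>
      intro hk
      obtain ⟨i, j, hij⟩ := hmv k (by omega)
      exact finSupp_move (ih (by omega)) hij
  have hE := weak_edges hs (fin m le_rfl)
  have hm1 : 1 ≤ m := by
    by_contra hc
    have : m = 0 := by omega
    subst this
    rw [h0, eqEdges_alt] at hE
    simp at hE
    omega
  obtain ⟨i, j, hj, hij⟩ := hleft
  rw [h0] at hij
  obtain ⟨k1, k2⟩ := first_step hn hodd hij hj
  have up : ∀ k, 1 ≤ k → k ≤ m → (eqEdges (f k)).ncard + 1 ≤ 2 * k := by
    intro k hk
    induction k, hk using Nat.le_induction with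
    | base => intro _; omega
    | succ k hk ih =>
      intro hk2
      obtain ⟨i, j, hij⟩ := hmv k (by omega)
      have := edges_le (fin k (by omega)) hij
      have := ih (by omega)
      omega
  have down : ∀ d, d + 1 ≤ m → 2 * (m - d) ≤ (eqEdges (f (m - d))).ncard + 1 := by
    intro d
    induction d with
    | zero => intro _; simp; omega
    | succ d ih =>
      intro hd
      obtain ⟨i, j, hij⟩ := hmv (m - (d + 1)) (by omega)
      have h1 := edges_le (fin _ (by omega)) hij
      have e : m - (d + 1) + 1 = m - d := by omega
      rw [e] at h1
      have := ih (by omega)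
      omega
  have eq : ∀ k, 1 ≤ k → k ≤ m → (eqEdges (f k)).ncard + 1 = 2 * k := by
    intro k h1 h2
    have a := up k h1 h2
    have b := down (m - k) (by omega)
    rw [show m - (m - k) = k by omega] at b
    omega
  have inv : ∀ k, 1 ≤ k → k ≤ m → (∃ h q, HoleState n (f k) h q) ∨ BlockState n (f k) := by
    intro k hk
    induction k, hk using Nat.le_induction with
    | base =>
      intro h1
      have := eq 1 le_rfl h1
      exact k2 (by omega)
    | succ k hk ih =>
      intro hk2
      obtain ⟨i, j, hij⟩ := hmv k (by omega)
      have e1 := eq k hk (by omega)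
      have e2 := eq (k + 1) (by omega) hk2
      obtain ⟨t1, t2, t3, t4⟩ := edges_tight (fin k (by omega)) hij (by omega)
      rcases ih (by omega) with ⟨h, q, H⟩ | H
      · exact hole_step H hij t1 t2 t3 t4
      · exact (block_no_move H hij t1 t2).elim
  rcases inv m hm1 le_rfl with ⟨h, q, H⟩ | H
  · exact weak_not_hole hs H
  · exact weak_not_block hs H

/-- reflection of a configuration -/
def reflConf (n : ℕ) (c : ℤ → Option Bool) : ℤ → Option Bool := fun p => c (n + 1 - p)

theorem refl_move {n : ℕ} {c c' : ℤ → Option Bool} {i j : ℤ} (h : MoveTo 3 i j c c') :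
    MoveTo 3 (n - 1 - i) (n - 1 - j) (reflConf n c) (reflConf n c') := by
  obtain ⟨m1, m2, m3⟩ := h
  push_cast at m1 m2 m3
  refine ⟨by push_cast; omega, ?_, ?_⟩
  · intro t t0 t1
    push_cast at t1
    have := m2 (2 - t) (by omega) (by omega)
    simp only [reflConf]
    rw [show (n : ℤ) + 1 - (n - 1 - i + t) = i + (2 - t) by ring,
      show (n : ℤ) + 1 - (n - 1 - j + t) = j + (2 - t) by ring]
    exact this
  · funext p
    simp only [reflConf, m3]
    push_cast
    rw [show i + ((n : ℤ) + 1 - p - j) = n + 1 - (n - 1 - i + (p - (n - 1 - j))) by ring]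
    split_ifs <;> first | rfl | omega

theorem refl_alt {n : ℕ} (hodd : n % 2 = 1) : reflConf n (altConfig n) = altConfig n := by
  funext p
  simp only [reflConf, altConfig_eq, altCol]
  split_ifs <;> first | rfl | omega

theorem refl_weak {n : ℕ} {c : ℤ → Option Bool} (h : WeakSorted n c) :
    WeakSorted n (reflConf n c) := by
  obtain ⟨j, s, w, hs1, hs2, h1, h2, h3⟩ := h
  refine ⟨2 - j, n - s, !w, by omega, by omega, ?_, ?_, ?_⟩
  · intro p
    simp only [reflConf, h1]
    omega
  · intro p p1 p2
    exact h3 _ (by omega) (by omega)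
  · intro p p1 p2
    rw [Bool.not_not]
    exact h2 _ (by omega) (by omega)

theorem lower_bound {n m : ℕ} (hn : 7 ≤ n) (hodd : n % 2 = 1) (h : SortsIn 3 n m) :
    (n + 1) / 2 ≤ m := by
  by_contra hlt
  have hm : 2 * m + 1 ≤ n := by omega
  obtain ⟨f, h0, hmv, hs⟩ := h
  have hw : WeakSorted n (f m) := by
    obtain ⟨j, w, g1, g2, g3⟩ := hs
    exact ⟨j, (((n + 1) / 2 : ℕ) : ℤ), w, by omega, by omega, g1, g2, g3⟩
  have hm1 : 0 < m := by
    by_contra hc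
    have : m = 0 := by omega
    subst this
    have := weak_edges hw (by rw [h0]; exact finSupp_alt n)
    rw [h0, eqEdges_alt] at this
    simp at this
    omega
  obtain ⟨i, j, hij⟩ := hmv 0 hm1
  have side : j ≤ -2 ∨ (n : ℤ) + 1 ≤ j := by
    have hh := hij.2.1
    rw [h0] at hh
    have vac : ∀ t : ℤ, 0 ≤ t → t < 3 → ¬ (1 ≤ j + t ∧ j + t ≤ n) := by
      intro t t0 t1 hc
      have := (hh t t0 (by push_cast; omega)).2
      rw [altConfig_eq, if_pos hc] at this
      unfold altCol at this
      split_ifs at this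
    have v0 := vac 0 (by omega) (by omega)
    have v1 := vac 1 (by omega) (by omega)
    have v2 := vac 2 (by omega) (by omega)
    omega
  rcases side with hj | hj
  · exact core hn hodd hm f h0 hmv hw ⟨i, j, hj, hij⟩
  · refine core hn hodd hm (fun k => reflConf n (f k)) ?_ ?_ (refl_weak hw)
      ⟨n - 1 - i, n - 1 - j, by omega, refl_move hij⟩
    · simp only [h0]
      exact refl_alt hodd
    · intro k hk
      obtain ⟨a, b, hab⟩ := hmv k hk
      exact ⟨_, _, refl_move hab⟩


theorem h_three_moves_three_mod_four (n : ℕ) (hn : 7 ≤ n) (hmod : n % 4 = 3) :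
    IsLeast {m : ℕ | SortsIn 3 n m} ((n + 1) / 2) := by
  refine ⟨?_, fun m hm => lower_bound hn (by omega) hm⟩
  obtain ⟨i, rfl⟩ : ∃ i, n = 4 * i + 3 := ⟨n / 4, by omega⟩
  have e : (4 * i + 3 + 1) / 2 = 2 * i + 2 := by omega
  rw [e]
  exact upper_bound i (by omega)
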